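/- The symmetric group S_n, partially ordered by absolute order (equivalently, by refinement), is Sperner: every antichain A in (S_n, ≤_T) satisfies |A| ≤ max over k of s(n, k), the largest unsigned Stirling number of the first kind; that is, no antichain is larger than the largest level. -/

import Mathlib

/-- The number of cycles of a permutation of `{1,…,n}` (here `Fin n`),
counting fixed points as cycles of length one. -/
def cycleCount {n : ℕ} (π : Equiv.Perm (Fin n)) : ℕ :=
  π.cycleType.card + (Finset.univ.filter fun x => π x = x).card

/-- The absolute length `ℓ_T(π) = n - c(π)`. -/
def absLength {n : ℕ} (π : Equiv.Perm (Fin n)) : ℕ :=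
  n - cycleCount π

/-- The absolute order on `S_n`: `σ ≤_T π` iff `ℓ_T(π) = ℓ_T(σ) + ℓ_T(σ⁻¹ π)`. -/
def absLe {n : ℕ} (σ π : Equiv.Perm (Fin n)) : Prop :=
  absLength π = absLength σ + absLength (σ⁻¹ * π)

/-- The unsigned Stirling number of the first kind `s(n,k)`: the number of
permutations of an `n`-element set with exactly `k` cycles (fixed points
counting as cycles of length one). -/
def stirlingFirst (n k : ℕ) : ℕ :=
  (Finset.univ.filter fun π : Equiv.Perm (Fin n) => cycleCount π = k).card

/-! Every `π ∈ S_n` is uniquely a product `(0 p₀)(1 p₁)⋯(n-1 pₙ₋₁)` with `pᵢ ≥ i`, its absolute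
length is the number of factors with `pᵢ ≠ i`, and deleting factors moves down in the absolute
order. Thus the absolute order contains a product of claws with `n - 1, …, 1, 0` legs with the same
rank function, and an antichain for the larger order is an antichain for the smaller one. If the
level sizes of a graded poset are log-concave and a flow pushes the uniform distribution of each
level onto that of the next, then the product with a claw inherits both properties. Finally, such a
flow gives the LYM inequality: the part of the up-set of an antichain `A` lying below the top level
flows into that up-set minus `A`, so the mass of `A`, with total mass one on each level, is at most
the mass of the top level. -/

open Equiv Equiv.Perm Finset

/-! ### Log-concave sequences -/

/-- Log-concavity of a sequence indexed by `ℤ`. Ranging over all `k ≤ l`, rather than only `k = l`,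
also rules out internal zeros when the terms are nonnegative. -/
def IsLogConcave {R : Type*} [Mul R] [LE R] (a : ℤ → R) : Prop :=
  ∀ k l, k ≤ l → a (k - 1) * a (l + 1) ≤ a k * a l

theorem IsLogConcave.add_const_mul_shift {R : Type*} [CommSemiring R] [PartialOrder R]
    [IsOrderedRing R] {a : ℤ → R} (ha : IsLogConcave a) {c : R} (hc : 0 ≤ c) :
    IsLogConcave fun k => a k + c * a (k - 1) := by
  intro k l hkl
  have wide : a (k - 1 - 1) * a (l + 1) ≤ a k * a (l - 1) := by
    rcases hkl.eq_or_lt with rfl | hlt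
    · simpa only [sub_add_cancel, mul_comm] using ha (k - 1) k (by lia)
    · calc a (k - 1 - 1) * a (l + 1) ≤ a (k - 1) * a l := ha (k - 1) l (by lia)
        _ = a (k - 1) * a (l - 1 + 1) := by rw [sub_add_cancel]
        _ ≤ a k * a (l - 1) := ha k (l - 1) (by lia)
  have shifted : a (k - 1 - 1) * a l ≤ a (k - 1) * a (l - 1) := by
    simpa only [sub_add_cancel] using ha (k - 1) (l - 1) (by lia)
  calc (a (k - 1) + c * a (k - 1 - 1)) * (a (l + 1) + c * a (l + 1 - 1))
      = a (k - 1) * a (l + 1) + c * (a (k - 1) * a l + a (k - 1 - 1) * a (l + 1))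
          + c ^ 2 * (a (k - 1 - 1) * a l) := by rw [add_sub_cancel_right]; ring
    _ ≤ a k * a l + c * (a (k - 1) * a l + a k * a (l - 1))
          + c ^ 2 * (a (k - 1) * a (l - 1)) := by
        have := pow_nonneg hc 2
        gcongr ?_ + c * (_ + ?_) + c ^ 2 * ?_
        exact ha k l hkl
    _ = (a k + c * a (k - 1)) * (a l + c * a (l - 1)) := by ring

/-! ### Normalized flows and the LYM inequality -/

section NormalizedFlow

variable {α β : Type*} [Fintype α] [Fintype β]

/-- The number of elements of rank `k`. Ranks are integers so that recursions for level sizes need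
no boundary case. -/
def levelCard (rank : α → ℤ) (k : ℤ) : ℕ := #{x | rank x = k}

/-- The mass of `x` when each level carries the uniform probability distribution. -/
def levelWeight (rank : α → ℤ) (x : α) : ℚ := (levelCard rank (rank x) : ℚ)⁻¹

/-- A normalized flow (Kleitman, Harper) on a relation `r` graded by `rank`: a nonnegative weighting
of the covering pairs that pushes the uniform distribution of each level below the top onto that of
the next one. -/
structure IsNormalizedFlow (r : α → α → Prop) (rank : α → ℤ) (w : α → α → ℚ) : Prop where
  nonneg : ∀ x y, 0 ≤ w x y
  rel_of_ne_zero : ∀ {x y}, w x y ≠ 0 → r x y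
  rank_of_ne_zero : ∀ {x y}, w x y ≠ 0 → rank y = rank x + 1
  sum_out : ∀ {x z}, rank x < rank z → ∑ y, w x y = levelWeight rank x
  sum_in_le : ∀ y, ∑ x, w x y ≤ levelWeight rank y

theorem levelCard_comp_equiv (rank : β → ℤ) (e : α ≃ β) :
    levelCard (rank ∘ e) = levelCard rank := by
  funext k
  exact card_equiv e (by simp)

theorem levelCard_pos {rank : α → ℤ} (x : α) : 0 < levelCard rank (rank x) :=
  card_pos.2 ⟨x, by simp⟩

theorem levelWeight_nonneg (rank : α → ℤ) (x : α) : 0 ≤ levelWeight rank x :=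
  inv_nonneg.2 (Nat.cast_nonneg _)

theorem levelWeight_pos (rank : α → ℤ) (x : α) : 0 < levelWeight rank x :=
  inv_pos.2 (Nat.cast_pos.2 (levelCard_pos x))

theorem sum_levelWeight_level {rank : α → ℤ} (z : α) :
    ∑ x with rank x = rank z, levelWeight rank x = 1 := by
  calc ∑ x with rank x = rank z, levelWeight rank x
      = ∑ x with rank x = rank z, levelWeight rank z :=
        sum_congr rfl fun x hx => by rw [levelWeight, (mem_filter.1 hx).2, levelWeight]
    _ = levelCard rank (rank z) * levelWeight rank z := by
        rw [sum_const, nsmul_eq_mul, levelCard]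
    _ = 1 := mul_inv_cancel₀ (Nat.cast_ne_zero.2 (levelCard_pos z).ne')

theorem isLogConcave_levelCard_of_const {rank : α → ℤ} (hrank : ∀ x y, rank x = rank y) :
    IsLogConcave (levelCard rank) := by
  intro k l hkl
  suffices h : levelCard rank (k - 1) * levelCard rank (l + 1) = 0 from h.trans_le (Nat.zero_le _)
  by_contra! h
  obtain ⟨x, hx⟩ := card_ne_zero.1 (left_ne_zero_of_mul h)
  obtain ⟨y, hy⟩ := card_ne_zero.1 (right_ne_zero_of_mul h)
  have := hrank x y
  have := (mem_filter.1 hx).2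
  have := (mem_filter.1 hy).2
  lia

theorem isNormalizedFlow_zero {r : α → α → Prop} {rank : α → ℤ} (hrank : ∀ x y, rank x = rank y) :
    IsNormalizedFlow r rank 0 where
  nonneg _ _ := le_rfl
  rel_of_ne_zero h := absurd rfl h
  rank_of_ne_zero h := absurd rfl h
  sum_out {x z} h := absurd (hrank x z) h.ne
  sum_in_le y := by simpa using levelWeight_nonneg rank y

namespace IsNormalizedFlow

variable {r : α → α → Prop} {rank : α → ℤ} {w : α → α → ℚ}

theorem comp_equiv {r : β → β → Prop} {rank : β → ℤ} {w : β → β → ℚ}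
    (hw : IsNormalizedFlow r rank w) (e : α ≃ β) :
    IsNormalizedFlow (fun x y => r (e x) (e y)) (rank ∘ e) fun x y => w (e x) (e y) where
  nonneg _ _ := hw.nonneg _ _
  rel_of_ne_zero := hw.rel_of_ne_zero
  rank_of_ne_zero := hw.rank_of_ne_zero
  sum_out h := by
    rw [e.sum_comp (w _), hw.sum_out h, levelWeight, levelWeight, levelCard_comp_equiv,
      Function.comp_apply]
  sum_in_le y := by
    rw [e.sum_comp (w · (e y)), levelWeight, levelCard_comp_equiv]
    exact hw.sum_in_le (e y)

theorem exists_rank_eq_add_one (hw : IsNormalizedFlow r rank w) {x z : α} (h : rank x < rank z) :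
    ∃ y, rank y = rank x + 1 := by
  have hne : ∑ y, w x y ≠ 0 := hw.sum_out h ▸ (levelWeight_pos rank x).ne'
  obtain ⟨y, -, hy⟩ := exists_ne_zero_of_sum_ne_zero hne
  exact ⟨y, hw.rank_of_ne_zero hy⟩

theorem sum_levelWeight_le (hw : IsNormalizedFlow r rank w) {S T : Finset α}
    (hS : ∀ x ∈ S, ∃ z, rank x < rank z) (hST : ∀ x ∈ S, ∀ y, w x y ≠ 0 → y ∈ T) :
    ∑ x ∈ S, levelWeight rank x ≤ ∑ y ∈ T, levelWeight rank y := by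
  calc ∑ x ∈ S, levelWeight rank x
      = ∑ x ∈ S, ∑ y, w x y := sum_congr rfl fun x hx => (hw.sum_out (hS x hx).choose_spec).symm
    _ = ∑ x ∈ S, ∑ y ∈ T, w x y := sum_congr rfl fun x hx =>
        (sum_subset (subset_univ T) fun y _ hy => of_not_not (hy ∘ hST x hx y)).symm
    _ = ∑ y ∈ T, ∑ x ∈ S, w x y := sum_comm
    _ ≤ ∑ y ∈ T, ∑ x, w x y := sum_le_sum fun y _ =>
        sum_le_sum_of_subset_of_nonneg (subset_univ S) fun x _ _ => hw.nonneg x y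
    _ ≤ ∑ y ∈ T, levelWeight rank y := sum_le_sum fun y _ => hw.sum_in_le y

theorem lym [IsPreorder α r] (hw : IsNormalizedFlow r rank w)
    (hrank : ∀ x y, r x y → rank x ≤ rank y) {A : Finset α} (hA : IsAntichain r (A : Set α)) :
    ∑ a ∈ A, levelWeight rank a ≤ 1 := by
  classical
  rcases isEmpty_or_nonempty α with _ | _
  · simp [eq_empty_of_isEmpty A]
  obtain ⟨top, le_top⟩ := Finite.exists_max rank
  let U : Finset α := {y | ∃ a ∈ A, r a y}
  let belowTop : Finset α := {y ∈ U | ¬rank y = rank top}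
  have hAU : A ⊆ U := fun a ha => by simpa [U] using ⟨a, ha, refl_of r a⟩
  have leaves_A : ∀ x ∈ belowTop, ∀ y, w x y ≠ 0 → y ∈ U \ A := by
    intro x hx y hxy
    obtain ⟨a, ha, hax⟩ : ∃ a ∈ A, r a x := (mem_filter.1 (mem_filter.1 hx).1).2
    have hay : r a y := trans_of r hax (hw.rel_of_ne_zero hxy)
    refine mem_sdiff.2 ⟨by simpa [U] using ⟨a, ha, hay⟩, fun hy => ?_⟩
    obtain rfl : a = y := hA.eq ha hy hay
    have := hrank a x hax
    have := hw.rank_of_ne_zero hxy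
    lia
  have flow_le : ∑ x ∈ belowTop, levelWeight rank x ≤ ∑ y ∈ U \ A, levelWeight rank y :=
    hw.sum_levelWeight_le
      (fun x hx => ⟨top, (le_top x).lt_of_ne (mem_filter.1 hx).2⟩) leaves_A
  have split_top := sum_filter_add_sum_filter_not U (rank · = rank top) (levelWeight rank)
  have split_A := sum_sdiff (f := levelWeight rank) hAU
  calc ∑ a ∈ A, levelWeight rank a
      ≤ ∑ x ∈ U with rank x = rank top, levelWeight rank x := by linarith
    _ ≤ ∑ x with rank x = rank top, levelWeight rank x :=
        sum_le_sum_of_subset_of_nonneg (filter_subset_filter _ (subset_univ U))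
          fun x _ _ => levelWeight_nonneg rank x
    _ = 1 := sum_levelWeight_level top

theorem card_antichain_le [IsPreorder α r] (hw : IsNormalizedFlow r rank w)
    (hrank : ∀ x y, r x y → rank x ≤ rank y) {A : Finset α} (hA : IsAntichain r (A : Set α))
    {M : ℕ} (hM : ∀ a ∈ A, levelCard rank (rank a) ≤ M) : #A ≤ M := by
  have one_le : ∀ a ∈ A, 1 ≤ M * levelWeight rank a := fun a ha => by
    rw [levelWeight, ← div_eq_mul_inv, one_le_div₀ (Nat.cast_pos.2 (levelCard_pos a))]
    exact_mod_cast hM a ha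
  have : (#A : ℚ) ≤ M :=
    calc (#A : ℚ) = ∑ a ∈ A, 1 := by simp
      _ ≤ ∑ a ∈ A, M * levelWeight rank a := sum_le_sum one_le
      _ = M * ∑ a ∈ A, levelWeight rank a := (mul_sum ..).symm
      _ ≤ M := mul_le_of_le_one_right M.cast_nonneg (hw.lym hrank hA)
  exact_mod_cast this

end IsNormalizedFlow

end NormalizedFlow

/-! ### Products with a claw -/

section Claw

variable {α : Type*} {m : ℕ}

/-- The product of `r` with the claw: the poset on `Fin (m + 1)` with least element `0` and no
other comparabilities. -/
def clawLe (m : ℕ) (r : α → α → Prop) (x y : Fin (m + 1) × α) : Prop :=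
  (x.1 = 0 ∨ x.1 = y.1) ∧ r x.2 y.2

/-- The rank function of the product of a graded poset with the claw. -/
def clawRank (m : ℕ) (rank : α → ℤ) (x : Fin (m + 1) × α) : ℤ :=
  rank x.2 + if x.1 = 0 then 0 else 1

instance clawLe.instIsPreorder {r : α → α → Prop} [IsPreorder α r] :
    IsPreorder (Fin (m + 1) × α) (clawLe m r) where
  refl x := ⟨Or.inr rfl, refl_of r x.2⟩
  trans _ _ _ hxy hyz :=
    ⟨hxy.1.elim Or.inl fun h => h ▸ hyz.1, trans_of r hxy.2 hyz.2⟩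

@[simp]
theorem clawRank_zero (rank : α → ℤ) (x : α) : clawRank m rank (0, x) = rank x := by
  simp [clawRank]

@[simp]
theorem clawRank_succ (rank : α → ℤ) (i : Fin m) (x : α) :
    clawRank m rank (i.succ, x) = rank x + 1 := by
  simp [clawRank]

variable [Fintype α]

theorem levelCard_clawRank (rank : α → ℤ) (k : ℤ) :
    levelCard (clawRank m rank) k = levelCard rank k + m * levelCard rank (k - 1) := by
  simp only [levelCard, card_filter, Fintype.sum_prod_type, Fin.sum_univ_succ, clawRank_zero,
    clawRank_succ, ← eq_sub_iff_add_eq, sum_const, card_univ, Fintype.card_fin, smul_eq_mul]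

theorem IsLogConcave.levelCard_clawRank {rank : α → ℤ} (h : IsLogConcave (levelCard rank)) :
    IsLogConcave (levelCard (clawRank m rank)) := by
  simpa only [← _root_.levelCard_clawRank] using h.add_const_mul_shift (Nat.zero_le m)

/-- The flow from `(0, x)` to each `(i, x)` with `i ≠ 0`, for `x` of rank `k`. It is what the
uniform distribution of level `k + 1` still lacks at `(i, x)` once the flow within the copy of `α`
at `i` is accounted for. -/
def legFlow (m : ℕ) (rank : α → ℤ) (k : ℤ) : ℚ :=
  (levelCard (clawRank m rank) (k + 1) : ℚ)⁻¹
    - levelCard rank (k - 1) / levelCard (clawRank m rank) k * (levelCard rank k : ℚ)⁻¹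

/-- The normalized flow on the product with the claw built from a normalized flow `w` on `α`: each
copy of `α` carries a rescaling of `w`, and `legFlow` runs along the legs of the claw. -/
def clawFlow [DecidableEq α] (m : ℕ) (rank : α → ℤ) (w : α → α → ℚ)
    (x y : Fin (m + 1) × α) : ℚ :=
  if x.1 = y.1 then
    (if x.1 = 0 then (levelCard rank (rank y.2) : ℚ) / levelCard (clawRank m rank) (rank y.2)
      else (levelCard rank (rank x.2) : ℚ) / levelCard (clawRank m rank) (rank x.2 + 1)) * w x.2 y.2
  else if x.1 = 0 ∧ x.2 = y.2 then legFlow m rank (rank x.2) else 0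

section

variable [DecidableEq α] (rank : α → ℤ) (w : α → α → ℚ) (x y : α) (i j : Fin m)

@[simp]
theorem clawFlow_zero_zero : clawFlow m rank w (0, x) (0, y) =
    levelCard rank (rank y) / levelCard (clawRank m rank) (rank y) * w x y := by
  simp [clawFlow]

@[simp]
theorem clawFlow_zero_succ : clawFlow m rank w (0, x) (j.succ, y) =
    if x = y then legFlow m rank (rank x) else 0 := by
  simp [clawFlow, (Fin.succ_ne_zero j).symm]

@[simp]
theorem clawFlow_succ_zero : clawFlow m rank w (i.succ, x) (0, y) = 0 := by
  simp [clawFlow]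

@[simp]
theorem clawFlow_succ_succ : clawFlow m rank w (i.succ, x) (j.succ, y) =
    if i = j then
      (levelCard rank (rank x) : ℚ) / levelCard (clawRank m rank) (rank x + 1) * w x y else 0 := by
  simp [clawFlow]

end

variable {rank : α → ℤ}

theorem legFlow_nonneg (h : IsLogConcave (levelCard rank)) (i : Fin m) (x : α) :
    0 ≤ legFlow m rank (rank x) := by
  set k := rank x
  have hN : 0 < levelCard rank k := levelCard_pos x
  have hM : 0 < levelCard (clawRank m rank) k := by
    simpa using levelCard_pos (rank := clawRank m rank) (0, x)
  have hM' : 0 < levelCard (clawRank m rank) (k + 1) := by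
    simpa using levelCard_pos (rank := clawRank m rank) (i.succ, x)
  have cross : levelCard rank (k - 1) * levelCard (clawRank m rank) (k + 1) ≤
      levelCard (clawRank m rank) k * levelCard rank k :=
    calc _ = levelCard rank (k - 1) * levelCard rank (k + 1)
          + m * (levelCard rank (k - 1) * levelCard rank k) := by
          rw [levelCard_clawRank, add_sub_cancel_right]; ring
      _ ≤ levelCard rank k * levelCard rank k
          + m * (levelCard rank (k - 1) * levelCard rank k) := by
          gcongr ?_ + _
          exact h k k le_rfl
      _ = _ := by rw [levelCard_clawRank]; ring
  rw [legFlow, sub_nonneg, ← div_eq_mul_inv, div_div, ← one_div,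
    div_le_div_iff₀ (by positivity) (by positivity), one_mul]
  exact_mod_cast cross

theorem legFlow_balance (x : α) (hM' : levelCard (clawRank m rank) (rank x + 1) ≠ 0) :
    levelCard rank (rank x + 1) / levelCard (clawRank m rank) (rank x + 1) * levelWeight rank x
      + m * legFlow m rank (rank x) = (levelCard (clawRank m rank) (rank x) : ℚ)⁻¹ := by
  have hN : (levelCard rank (rank x) : ℚ) ≠ 0 := Nat.cast_ne_zero.2 (levelCard_pos x).ne'
  have hM : (levelCard (clawRank m rank) (rank x) : ℚ) ≠ 0 := by
    simpa using (levelCard_pos (rank := clawRank m rank) (0, x)).ne'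
  replace hM' : (levelCard (clawRank m rank) (rank x + 1) : ℚ) ≠ 0 := Nat.cast_ne_zero.2 hM'
  have recM : (levelCard (clawRank m rank) (rank x) : ℚ) =
      levelCard rank (rank x) + m * levelCard rank (rank x - 1) := by
    exact_mod_cast levelCard_clawRank rank (rank x)
  have recM' : (levelCard (clawRank m rank) (rank x + 1) : ℚ) =
      levelCard rank (rank x + 1) + m * levelCard rank (rank x) := by
    exact_mod_cast add_sub_cancel_right (rank x) 1 ▸ levelCard_clawRank rank (rank x + 1)
  rw [legFlow, levelWeight]
  field_simp
  rw [recM, recM']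
  ring

namespace IsNormalizedFlow

variable {r : α → α → Prop} {w : α → α → ℚ}

theorem apply_rank_mul (hw : IsNormalizedFlow r rank w) (f : ℤ → ℚ) (x y : α) :
    f (rank y) * w x y = f (rank x + 1) * w x y := by
  by_cases h : w x y = 0
  · rw [h, mul_zero, mul_zero]
  · rw [hw.rank_of_ne_zero h]

theorem levelCard_clawRank_add_one_ne_zero (hw : IsNormalizedFlow r rank w) {x : α}
    {z : Fin (m + 1) × α} (h : rank x < clawRank m rank z) :
    levelCard (clawRank m rank) (rank x + 1) ≠ 0 := by
  obtain ⟨q, z⟩ := z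
  cases q using Fin.cases with
  | zero =>
    obtain ⟨y, hy⟩ := hw.exists_rank_eq_add_one (by simpa using h)
    simpa [hy] using (levelCard_pos (rank := clawRank m rank) (0, y)).ne'
  | succ j => simpa using (levelCard_pos (rank := clawRank m rank) (j.succ, x)).ne'

theorem levelCard_mul_sum_out (hw : IsNormalizedFlow r rank w) (x : α) :
    levelCard rank (rank x + 1) * ∑ y, w x y
      = levelCard rank (rank x + 1) * levelWeight rank x := by
  by_cases h : levelCard rank (rank x + 1) = 0
  · simp [h]
  · obtain ⟨z, hz⟩ := card_ne_zero.1 h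
    rw [hw.sum_out (z := z) (by have := (mem_filter.1 hz).2; lia)]

variable [DecidableEq α]

theorem clawFlow_nonneg (hw : IsNormalizedFlow r rank w) (h : IsLogConcave (levelCard rank))
    (x y : Fin (m + 1) × α) : 0 ≤ clawFlow m rank w x y := by
  obtain ⟨p, x⟩ := x
  obtain ⟨q, y⟩ := y
  have := hw.nonneg x y
  cases p using Fin.cases <;> cases q using Fin.cases with
  | zero => simp only [clawFlow_zero_zero, clawFlow_succ_zero]; positivity
  | succ j =>
    have := legFlow_nonneg h j x
    simp only [clawFlow_zero_succ, clawFlow_succ_succ]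
    positivity

theorem clawLe_and_clawRank_of_clawFlow_ne_zero [Std.Refl r] (hw : IsNormalizedFlow r rank w)
    {x y : Fin (m + 1) × α} (h : clawFlow m rank w x y ≠ 0) :
    clawLe m r x y ∧ clawRank m rank y = clawRank m rank x + 1 := by
  obtain ⟨p, x⟩ := x
  obtain ⟨q, y⟩ := y
  by_cases hpq : p = q
  · subst hpq
    rw [clawFlow, if_pos rfl] at h
    have hxy : w x y ≠ 0 := right_ne_zero_of_mul h
    exact ⟨⟨Or.inr rfl, hw.rel_of_ne_zero hxy⟩,
      by simp only [clawRank, hw.rank_of_ne_zero hxy, add_right_comm]⟩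
  · rw [clawFlow, if_neg hpq] at h
    obtain ⟨rfl, rfl⟩ : p = 0 ∧ x = y := by
      by_contra hleg
      exact h (if_neg hleg)
    exact ⟨⟨Or.inl rfl, refl_of r x⟩, by simp [clawRank, Ne.symm hpq]⟩

theorem sum_clawFlow_out (hw : IsNormalizedFlow r rank w) {x z : Fin (m + 1) × α}
    (h : clawRank m rank x < clawRank m rank z) :
    ∑ y, clawFlow m rank w x y = levelWeight (clawRank m rank) x := by
  obtain ⟨p, x⟩ := x
  rw [Fintype.sum_prod_type, Fin.sum_univ_succ]
  cases p using Fin.cases with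
  | zero =>
    rw [clawRank_zero] at h
    have within : ∑ y, clawFlow m rank w (0, x) (0, y) =
        levelCard rank (rank x + 1) / levelCard (clawRank m rank) (rank x + 1)
          * levelWeight rank x := by
      simp_rw [clawFlow_zero_zero]
      rw [sum_congr rfl fun y _ => hw.apply_rank_mul
        (fun k => levelCard rank k / levelCard (clawRank m rank) k) x y, ← mul_sum,
        div_mul_eq_mul_div, hw.levelCard_mul_sum_out, mul_div_right_comm]
    have legs : ∑ j : Fin m, ∑ y, clawFlow m rank w (0, x) (j.succ, y) =
        m * legFlow m rank (rank x) := by simp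
    rw [within, legs, legFlow_balance x (hw.levelCard_clawRank_add_one_ne_zero h), levelWeight,
      clawRank_zero]
  | succ i =>
    have hN : (levelCard rank (rank x) : ℚ) ≠ 0 := Nat.cast_ne_zero.2 (levelCard_pos x).ne'
    have hxz : rank x < rank z.2 := by
      have : clawRank m rank z ≤ rank z.2 + 1 := by unfold clawRank; split_ifs <;> lia
      rw [clawRank_succ] at h
      lia
    have within : ∑ j : Fin m, ∑ y, clawFlow m rank w (i.succ, x) (j.succ, y) =
        levelCard rank (rank x) / levelCard (clawRank m rank) (rank x + 1) * ∑ y, w x y := by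
      rw [sum_comm, mul_sum]
      simp
    rw [within, hw.sum_out hxz, levelWeight, levelWeight, clawRank_succ]
    simp only [clawFlow_succ_zero, sum_const_zero, zero_add]
    field_simp

theorem sum_clawFlow_in_le (hw : IsNormalizedFlow r rank w) (y : Fin (m + 1) × α) :
    ∑ x, clawFlow m rank w x y ≤ levelWeight (clawRank m rank) y := by
  obtain ⟨q, y⟩ := y
  have hN : (levelCard rank (rank y) : ℚ) ≠ 0 := Nat.cast_ne_zero.2 (levelCard_pos y).ne'
  rw [Fintype.sum_prod_type, Fin.sum_univ_succ]
  cases q using Fin.cases with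
  | zero =>
    simp only [clawFlow_zero_zero, clawFlow_succ_zero, sum_const_zero, add_zero, ← mul_sum]
    calc levelCard rank (rank y) / levelCard (clawRank m rank) (rank y) * ∑ x, w x y
        ≤ levelCard rank (rank y) / levelCard (clawRank m rank) (rank y) * levelWeight rank y := by
          gcongr
          exact hw.sum_in_le y
      _ = levelWeight (clawRank m rank) (0, y) := by
          rw [levelWeight, levelWeight, clawRank_zero]
          field_simp
  | succ j =>
    have leg : ∑ x, clawFlow m rank w (0, x) (j.succ, y) = legFlow m rank (rank y) := by simp
    have within : ∑ i : Fin m, ∑ x, clawFlow m rank w (i.succ, x) (j.succ, y) =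
        levelCard rank (rank y - 1) / levelCard (clawRank m rank) (rank y) * ∑ x, w x y := by
      rw [sum_comm, mul_sum]
      refine sum_congr rfl fun x _ => ?_
      simpa using (hw.apply_rank_mul
        (fun k => levelCard rank (k - 1) / levelCard (clawRank m rank) k) x y).symm
    calc _ = legFlow m rank (rank y)
          + levelCard rank (rank y - 1) / levelCard (clawRank m rank) (rank y) * ∑ x, w x y := by
          rw [leg, within]
      _ ≤ legFlow m rank (rank y)
          + levelCard rank (rank y - 1) / levelCard (clawRank m rank) (rank y)
            * levelWeight rank y := by
          gcongr
          exact hw.sum_in_le y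
      _ = levelWeight (clawRank m rank) (j.succ, y) := by
          rw [legFlow, levelWeight, levelWeight, clawRank_succ, sub_add_cancel]

theorem claw [Std.Refl r] (hw : IsNormalizedFlow r rank w) (h : IsLogConcave (levelCard rank)) :
    IsNormalizedFlow (clawLe m r) (clawRank m rank) (clawFlow m rank w) where
  nonneg := hw.clawFlow_nonneg h
  rel_of_ne_zero hxy := (hw.clawLe_and_clawRank_of_clawFlow_ne_zero hxy).1
  rank_of_ne_zero hxy := (hw.clawLe_and_clawRank_of_clawFlow_ne_zero hxy).2
  sum_out := hw.sum_clawFlow_out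
  sum_in_le := hw.sum_clawFlow_in_le

end IsNormalizedFlow

end Claw

/-! ### Absolute length -/

section AbsLength

variable {n : ℕ}

theorem card_cycleType_le_card_support {α : Type*} [Fintype α] [DecidableEq α] (f : Perm α) :
    f.cycleType.card ≤ #f.support := by
  simpa [sum_cycleType] using Multiset.card_nsmul_le_sum (a := 1)
    fun _ hk => (one_lt_of_mem_cycleType (σ := f) hk).le

theorem cycleCount_add_card_support (f : Perm (Fin n)) :
    cycleCount f + #f.support = f.cycleType.card + n := by
  have := card_filter_add_card_filter_not (s := univ) fun x => f x = x
  rw [card_fin] at this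
  rw [cycleCount, support, add_assoc, this]

theorem absLength_add_card_cycleType (f : Perm (Fin n)) :
    absLength f + f.cycleType.card = #f.support := by
  have := cycleCount_add_card_support f
  have := card_cycleType_le_card_support f
  unfold absLength
  lia

theorem cycleCount_add_absLength (f : Perm (Fin n)) : cycleCount f + absLength f = n := by
  have := cycleCount_add_card_support f
  have := absLength_add_card_cycleType f
  lia

theorem absLength_eq_of_cycleType_eq {m : ℕ} {f : Perm (Fin m)} {g : Perm (Fin n)}
    (h : f.cycleType = g.cycleType) : absLength f = absLength g := by
  have hf := absLength_add_card_cycleType f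
  have hg := absLength_add_card_cycleType g
  rw [← sum_cycleType] at hf hg
  rw [h] at hf
  lia

theorem absLength_one : absLength (1 : Perm (Fin n)) = 0 := by
  simpa using absLength_add_card_cycleType (1 : Perm (Fin n))

theorem absLength_add_one_of_isCycle {f : Perm (Fin n)} (hf : f.IsCycle) :
    absLength f + 1 = #f.support := by
  rw [← absLength_add_card_cycleType, card_cycleType_eq_one.2 hf]

theorem absLength_mul_of_disjoint {f g : Perm (Fin n)} (h : f.Disjoint g) :
    absLength (f * g) = absLength f + absLength g := by
  have hf := absLength_add_card_cycleType f
  have hg := absLength_add_card_cycleType g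
  have hfg := absLength_add_card_cycleType (f * g)
  rw [h.cycleType_mul, h.card_support_mul, Multiset.card_add] at hfg
  lia

theorem absLength_swap_apply_mul_of_isCycle {f : Perm (Fin n)} (hf : f.IsCycle) {x : Fin n}
    (hx : f x ≠ x) : absLength (swap x (f x) * f) + 1 = absLength f := by
  by_cases hffx : f (f x) = x
  · have hswap := hf.eq_swap_of_apply_apply_eq_self hx hffx
    have : swap x (f x) * f = 1 := by
      nth_rw 2 [hswap]
      exact swap_mul_self ..
    have hlen := absLength_add_one_of_isCycle hf
    rw [hswap, card_support_swap hx.symm, ← hswap] at hlen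
    rw [this, absLength_one]
    lia
  · have hlen := absLength_add_one_of_isCycle (hf.swap_mul hx hffx)
    rw [support_swap_mul_eq f x hffx, card_sdiff_of_subset (by simpa using hx), card_singleton,
      ← absLength_add_one_of_isCycle hf] at hlen
    exact hlen

theorem absLength_swap_apply_mul (f : Perm (Fin n)) {x : Fin n} (hx : f x ≠ x) :
    absLength (swap x (f x) * f) + 1 = absLength f := by
  set c := f.cycleOf x
  have hc : c.IsCycle := isCycle_cycleOf f hx
  have hcx : c x = f x := cycleOf_apply_self f x
  have hdisj : (f * c⁻¹).Disjoint c := disjoint_mul_inv_of_mem_cycleFactorsFinset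
    (cycleOf_mem_cycleFactorsFinset_iff.2 (mem_support.2 hx))
  have hf : f = c * (f * c⁻¹) := by rw [← hdisj.commute.eq, inv_mul_cancel_right]
  have hdisj' : (swap x (c x) * c).Disjoint (f * c⁻¹) := by
    refine disjoint_iff_disjoint_support.2
      (disjoint_iff_disjoint_support.1 hdisj.symm |>.mono_left fun y hy => ?_)
    exact mem_support.2 (ne_and_ne_of_swap_mul_apply_ne_self (mem_support.1 hy)).1
  calc absLength (swap x (f x) * f) + 1
      = absLength (swap x (c x) * c * (f * c⁻¹)) + 1 := by rw [mul_assoc, ← hf, hcx]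
    _ = absLength (swap x (c x) * c) + 1 + absLength (f * c⁻¹) := by
        rw [absLength_mul_of_disjoint hdisj', add_right_comm]
    _ = absLength (c * (f * c⁻¹)) := by
        rw [absLength_swap_apply_mul_of_isCycle hc (hcx ▸ hx), absLength_mul_of_disjoint hdisj.symm]
    _ = absLength f := by rw [← hf]

theorem absLength_swap_mul_of_apply_eq_self {f : Perm (Fin n)} {x y : Fin n} (hx : f x = x)
    (hxy : x ≠ y) : absLength (swap x y * f) = absLength f + 1 := by
  have hgx : (swap x y * f) x = y := by rw [mul_apply, hx, swap_apply_left]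
  have := absLength_swap_apply_mul (swap x y * f) (x := x) (by rw [hgx]; exact hxy.symm)
  rw [← this, hgx, swap_mul_self_mul]

end AbsLength

/-! ### The factorization of a permutation into transpositions along `decomposeFin` -/

section DecomposeFin

variable {n : ℕ}

theorem decomposeFin_symm_eq_swap_mul (p : Fin (n + 1)) (e : Perm (Fin n)) :
    decomposeFin.symm (p, e) = swap 0 p * decomposeFin.symm (0, e) := by
  ext x
  cases x using Fin.cases <;> simp

theorem decomposeFin_symm_zero_mul (e e' : Perm (Fin n)) :
    decomposeFin.symm (0, e * e') = decomposeFin.symm (0, e) * decomposeFin.symm (0, e') := by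
  ext x
  cases x using Fin.cases <;> simp

theorem decomposeFin_symm_zero_inv_apply_zero (e : Perm (Fin n)) :
    (decomposeFin.symm (0, e))⁻¹ 0 = 0 := by
  rw [inv_eq_iff_eq, decomposeFin_symm_apply_zero]

theorem decomposeFin_symm_inv_mul (p : Fin (n + 1)) (e e' : Perm (Fin n)) :
    (decomposeFin.symm (0, e))⁻¹ * decomposeFin.symm (p, e') =
      decomposeFin.symm ((decomposeFin.symm (0, e))⁻¹ p, e⁻¹ * e') := by
  have hmul := decomposeFin_symm_zero_mul e (e⁻¹ * e')
  rw [mul_inv_cancel_left] at hmul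
  rw [decomposeFin_symm_eq_swap_mul p e', decomposeFin_symm_eq_swap_mul _ (e⁻¹ * e'), hmul,
    ← mul_assoc, mul_swap_eq_swap_mul, decomposeFin_symm_zero_inv_apply_zero]
  group

theorem decomposeFin_symm_zero (e : Perm (Fin n)) :
    decomposeFin.symm (0, e) = e.extendDomain (finSuccAboveEquiv (0 : Fin (n + 1))) := by
  ext x
  cases x using Fin.cases with
  | zero => simp [extendDomain_apply_not_subtype]
  | succ i =>
    have := extendDomain_apply_image e (finSuccAboveEquiv (0 : Fin (n + 1))) i
    simp only [finSuccAboveEquiv_apply, Fin.zero_succAbove] at this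
    rw [this, decomposeFin_symm_apply_succ, swap_self, refl_apply]

theorem absLength_decomposeFin_symm (p : Fin (n + 1)) (e : Perm (Fin n)) :
    absLength (decomposeFin.symm (p, e)) = absLength e + if p = 0 then 0 else 1 := by
  have hzero : absLength (decomposeFin.symm (0, e)) = absLength e :=
    absLength_eq_of_cycleType_eq (by rw [decomposeFin_symm_zero, cycleType_extendDomain])
  split_ifs with hp
  · rw [hp, hzero, add_zero]
  · rw [decomposeFin_symm_eq_swap_mul,
      absLength_swap_mul_of_apply_eq_self (by simp) (Ne.symm hp), hzero]

theorem absLe_decomposeFin_symm {p q : Fin (n + 1)} {e e' : Perm (Fin n)} (hpq : p = 0 ∨ p = q)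
    (h : absLe e e') : absLe (decomposeFin.symm (p, e)) (decomposeFin.symm (q, e')) := by
  unfold absLe at h ⊢
  rcases hpq with rfl | rfl
  · rw [decomposeFin_symm_inv_mul]
    simp only [absLength_decomposeFin_symm, h, inv_eq_iff_eq, decomposeFin_symm_apply_zero, if_true]
    lia
  · have hcancel : (decomposeFin.symm (p, e))⁻¹ * decomposeFin.symm (p, e') =
        decomposeFin.symm (0, e⁻¹ * e') := by
      rw [decomposeFin_symm_eq_swap_mul p e, decomposeFin_symm_eq_swap_mul p e', mul_inv_rev,
        mul_assoc, inv_mul_cancel_left, decomposeFin_symm_inv_mul,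
        decomposeFin_symm_zero_inv_apply_zero]
    simp only [hcancel, absLength_decomposeFin_symm, h, if_true]
    lia

end DecomposeFin

/-! ### The symmetric group as an iterated claw product -/

/-- The order making `S_n` a product of claws with `0, …, n - 1` legs. Along `decomposeFin`, each
permutation factors uniquely as `(0 p₀)(1 p₁)⋯(n-1 pₙ₋₁)` with `pᵢ ≥ i`, and `σ` lies below `π` when
`σ` arises by replacing some of the factors of `π` by the identity. -/
def subwordLe : (n : ℕ) → Perm (Fin n) → Perm (Fin n) → Prop
  | 0 => fun _ _ => True
  | n + 1 => fun σ π => clawLe n (subwordLe n) (decomposeFin σ) (decomposeFin π)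

instance subwordLe.instIsPreorder : (n : ℕ) → IsPreorder (Perm (Fin n)) (subwordLe n)
  | 0 => { refl _ := trivial, trans _ _ _ _ _ := trivial }
  | n + 1 =>
    have := subwordLe.instIsPreorder n
    { refl σ := refl_of (clawLe n (subwordLe n)) (decomposeFin σ)
      trans _ _ _ hστ hτπ := trans_of (clawLe n (subwordLe n)) hστ hτπ }

theorem absLe_of_subwordLe {n : ℕ} {σ π : Perm (Fin n)} (h : subwordLe n σ π) : absLe σ π := by
  induction n with
  | zero => simp [absLe, absLength]
  | succ n ih => simpa using absLe_decomposeFin_symm h.1 (ih h.2)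

/-- Absolute length as an integer-valued rank function. -/
def absRank (n : ℕ) (π : Perm (Fin n)) : ℤ := absLength π

theorem absRank_le_absRank {n : ℕ} (σ π : Perm (Fin n)) (h : subwordLe n σ π) :
    absRank n σ ≤ absRank n π :=
  Nat.cast_le.2 ((Nat.le_add_right ..).trans_eq (absLe_of_subwordLe h).symm)

theorem absRank_succ (n : ℕ) : absRank (n + 1) = clawRank n (absRank n) ∘ decomposeFin := by
  funext π
  obtain ⟨⟨p, e⟩, rfl⟩ := decomposeFin.symm.surjective π
  simp [absRank, clawRank, absLength_decomposeFin_symm]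

theorem isLogConcave_levelCard_absRank (n : ℕ) : IsLogConcave (levelCard (absRank n)) := by
  induction n with
  | zero => exact isLogConcave_levelCard_of_const fun σ π => by rw [Subsingleton.elim σ π]
  | succ n ih =>
    rw [absRank_succ, levelCard_comp_equiv]
    exact ih.levelCard_clawRank

theorem exists_isNormalizedFlow_subwordLe (n : ℕ) :
    ∃ w, IsNormalizedFlow (subwordLe n) (absRank n) w := by
  induction n with
  | zero => exact ⟨0, isNormalizedFlow_zero fun σ π => by rw [Subsingleton.elim σ π]⟩
  | succ n ih =>
    obtain ⟨w, hw⟩ := ih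
    rw [absRank_succ]
    exact ⟨_, (hw.claw (isLogConcave_levelCard_absRank n)).comp_equiv decomposeFin⟩

theorem levelCard_absRank {n : ℕ} (π : Perm (Fin n)) :
    levelCard (absRank n) (absRank n π) = stirlingFirst n (cycleCount π) := by
  refine congrArg card (filter_congr fun σ _ => ?_)
  have := cycleCount_add_absLength σ
  have := cycleCount_add_absLength π
  unfold absRank
  lia

theorem symmetric_group_sperner_general (n : ℕ) (A : Finset (Equiv.Perm (Fin n)))
    (hA : IsAntichain (subwordLe n) (A : Set (Equiv.Perm (Fin n)))) :
    A.card ≤ (Finset.range (n + 1)).sup fun k => stirlingFirst n k := by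
  obtain ⟨w, hw⟩ := exists_isNormalizedFlow_subwordLe n
  refine hw.card_antichain_le absRank_le_absRank hA fun π _ => ?_
  rw [levelCard_absRank]
  have := cycleCount_add_absLength π
  exact le_sup (f := stirlingFirst n) (mem_range.2 (by lia))

/-- `S_n`, partially ordered by absolute order (equivalently, by refinement),
is Sperner: every antichain `A` satisfies `|A| ≤ max_k s(n,k)`, the largest
unsigned Stirling number of the first kind. -/
theorem symmetric_group_sperner (n : ℕ) (A : Finset (Equiv.Perm (Fin n)))
    (hA : IsAntichain absLe (A : Set (Equiv.Perm (Fin n)))) :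
    A.card ≤ (Finset.range (n + 1)).sup fun k => stirlingFirst n k :=
  symmetric_group_sperner_general n A (hA.mono fun _ _ => absLe_of_subwordLe)
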